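/- arXiv:2601.07535 — 3 statements merged into one kernel-verified Lean document; each statement's English description precedes it below -/
import Mathlib

section
/- (Lemma A.1, type I error of CLUSTER.) Under the single-round CLUSTER construction described in the context, the probability that there exist i ≠ j in [N] with μ_i = μ_j such that i and j lie in different connected components of the random graph G is at most δ'. -/
open MeasureTheory ProbabilityTheory Finset

noncomputable section

/-- The kernel `g(x,y) = ⟪φ x, φ y⟫` associated with the feature map `φ`. -/
def kerG {𝒳 H : Type*} [NormedAddCommGroup H] [InnerProductSpace ℝ H]
    (φ : 𝒳 → H) (x y : 𝒳) : ℝ :=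
  inner ℝ (φ x) (φ y)

/-- The supremum `ḡ = sup_{x,y} g(x,y)` of the kernel. -/
def kerSup {𝒳 H : Type*} [NormedAddCommGroup H] [InnerProductSpace ℝ H]
    (φ : 𝒳 → H) : ℝ :=
  ⨆ p : 𝒳 × 𝒳, kerG φ p.1 p.2

/-- The range `g̃ = sup_{x,y} g(x,y) − inf_{x,y} g(x,y)` of the kernel. -/
def kerRange {𝒳 H : Type*} [NormedAddCommGroup H] [InnerProductSpace ℝ H]
    (φ : 𝒳 → H) : ℝ :=
  (⨆ p : 𝒳 × 𝒳, kerG φ p.1 p.2) - (⨅ p : 𝒳 × 𝒳, kerG φ p.1 p.2)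

/-- The kernel mean embedding `μ_ν = E_{X∼ν}[φ(X)]` (a Bochner integral). -/
def KME {𝒳 H : Type*} [MeasurableSpace 𝒳] [NormedAddCommGroup H] [InnerProductSpace ℝ H]
    (φ : 𝒳 → H) (ν : Measure 𝒳) : H :=
  ∫ x, φ x ∂ν

/-- The RKHS variance `𝒱*_ν = E_{X∼ν}[‖φ(X) − μ_ν‖²]`. -/
def Vstar {𝒳 H : Type*} [MeasurableSpace 𝒳] [NormedAddCommGroup H] [InnerProductSpace ℝ H]
    (φ : 𝒳 → H) (ν : Measure 𝒳) : ℝ :=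
  ∫ x, ‖φ x - KME φ ν‖ ^ 2 ∂ν

/-- The empirical kernel mean embedding `μ̂ = (1/n) Σ_{t<n} φ(x_t)`. -/
def empKME {𝒳 H : Type*} [NormedAddCommGroup H] [InnerProductSpace ℝ H]
    (φ : 𝒳 → H) (n : ℕ) (x : ℕ → 𝒳) : H :=
  (n : ℝ)⁻¹ • ∑ t ∈ range n, φ (x t)

/-- The empirical RKHS variance
`𝒱̂ = (1/(n−1)) Σ_{t<n} (g(x_t,x_t) − (1/n) Σ_{s<n} g(x_t,x_s))`. -/
def empVar {𝒳 H : Type*} [NormedAddCommGroup H] [InnerProductSpace ℝ H]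
    (φ : 𝒳 → H) (n : ℕ) (x : ℕ → 𝒳) : ℝ :=
  ((n : ℝ) - 1)⁻¹ * ∑ t ∈ range n,
    (kerG φ (x t) (x t) - (n : ℝ)⁻¹ * ∑ s ∈ range n, kerG φ (x t) (x s))

/-- The variance-aware threshold
`B^{i,j}(n,δ') = (√𝒱̂_i + √𝒱̂_j) √(2 log(8(N²−N)/δ')/n) + (32/3) √g̃ log(8(N²−N)/δ')/n`. -/
def clusterThreshold {𝒳 H : Type*} [NormedAddCommGroup H] [InnerProductSpace ℝ H]
    (φ : 𝒳 → H) (N n : ℕ) (δ' : ℝ) (Vi Vj : ℝ) : ℝ :=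
  (Real.sqrt Vi + Real.sqrt Vj)
      * Real.sqrt (2 * Real.log (8 * ((N : ℝ) ^ 2 - N) / δ') / n)
    + (32 / 3) * Real.sqrt (kerRange φ) * (Real.log (8 * ((N : ℝ) ^ 2 - N) / δ') / n)

/-- The random graph of the CLUSTER subroutine: an edge `{i,j}` (for `i ≠ j`) whenever
`‖μ̂_i − μ̂_j‖ ≤ B^{i,j}(n,δ')`. -/
def clusterGraph {𝒳 H : Type*} [NormedAddCommGroup H] [InnerProductSpace ℝ H]
    (φ : 𝒳 → H) (N n : ℕ) (δ' : ℝ) (x : Fin N → ℕ → 𝒳) : SimpleGraph (Fin N) :=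
  SimpleGraph.fromRel (fun i j =>
    ‖empKME φ n (x i) - empKME φ n (x j)‖
      ≤ clusterThreshold φ N n δ' (empVar φ n (x i)) (empVar φ n (x j)))

/-- The signal-to-noise ratio
`s*² = min_{i ≠ j, μ_i ≠ μ_j} min(‖μ_i − μ_j‖² / max(𝒱*_i, 𝒱*_j), 2‖μ_i − μ_j‖/√ḡ)`. -/
def snrSq {𝒳 H : Type*} [MeasurableSpace 𝒳] [NormedAddCommGroup H] [InnerProductSpace ℝ H]
    (φ : 𝒳 → H) (N : ℕ) (ν : Fin N → Measure 𝒳) : ℝ :=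
  sInf {x : ℝ | ∃ i j : Fin N, i ≠ j ∧ KME φ (ν i) ≠ KME φ (ν j) ∧
    x = min (‖KME φ (ν i) - KME φ (ν j)‖ ^ 2 / max (Vstar φ (ν i)) (Vstar φ (ν j)))
            (2 * ‖KME φ (ν i) - KME φ (ν j)‖ / Real.sqrt (kerSup φ))}

theorem aux_det {D q a M W v : ℝ} (hq : 0 ≤ q) (ha : 0 ≤ a) (hM : 0 ≤ M) (hv : 0 ≤ v)
    (hD : D ≤ q * a + M * q ^ 2 / 6) (hW : (a - M * q / 2) ^ 2 ≤ W + M ^ 2 * q ^ 2 / 4)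
    (hWv : W ≤ v ^ 2 + D ^ 2) (haM : a ≤ M) (hD0 : 0 ≤ D) :
    D ≤ v * q + 1.88 * M * q ^ 2 := by
  by_contra hcon
  push Not at hcon
  have hqa : q * a ≤ q * M := mul_le_mul_of_nonneg_left haM hq
  have hvq : 0 ≤ v * q := by positivity
  have hqM : 0 < q * M := by
    rcases (mul_nonneg hq hM).lt_or_eq with h | h
    · exact h
    · exfalso
      nlinarith [h, mul_nonneg hM (sq_nonneg q)]
  have hq1 : q ≤ 0.584 := by
    by_contra h
    push Not at h
    nlinarith
  have hD1 : D ≤ 1.0974 * (q * M) := by nlinarith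
  have hD2 : D ^ 2 ≤ 1.2043 * (q * M) ^ 2 := by nlinarith
  have h1 : a - M * q / 2 ≤ v + 1.206 * (q * M) := by
    apply le_of_sq_le_sq _ (by positivity)
    nlinarith [mul_nonneg hv hqM.le, sq_nonneg (q * M)]
  have h2 : q * a ≤ q * (v + 1.706 * (q * M)) := by
    apply mul_le_mul_of_nonneg_left _ hq
    linarith
  nlinarith [mul_nonneg hM (sq_nonneg q)]

theorem aux_exp_neg {x : ℝ} (hx : 0 ≤ x) : Real.exp (-x) ≤ 1 - x + x ^ 2 / 2 := by
  have h := Real.quadratic_le_exp_of_nonneg hx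
  have h0 : 0 < 1 - x + x ^ 2 / 2 := by nlinarith [sq_nonneg (x - 1)]
  rw [Real.exp_neg, inv_le_comm₀ (Real.exp_pos x) h0, inv_le_iff_one_le_mul₀ h0]
  nlinarith [sq_nonneg (x ^ 2), mul_le_mul_of_nonneg_right h h0.le]

theorem aux_bern {b K : ℝ} (hb : 0 ≤ b) (hbK : b ≤ K) (hK : K < 3) :
    Real.exp b - 1 - b ≤ b ^ 2 / (2 * (1 - K / 3)) := by
  have key : (1 - b / 3) * (Real.exp b - 1 - b) ≤ b ^ 2 / 2 := by
    have h1 : MonotoneOn (fun b : ℝ => b + (Real.exp b - 1 - b) / 3 - (1 - b / 3) * (Real.exp b - 1))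
        (Set.Ici 0) := by
      apply monotoneOn_of_hasDerivWithinAt_nonneg (convex_Ici 0)
        (f' := fun b => (1 - Real.exp b * (1 - b)) / 3)
      · fun_prop
      · intro x hx
        apply HasDerivAt.hasDerivWithinAt
        have he := Real.hasDerivAt_exp x
        have hi := hasDerivAt_id x
        convert! (hi.add (((he.sub_const 1).sub hi).div_const 3)).sub
          (((hi.div_const 3).const_sub 1).mul (he.sub_const 1)) using 1
        simp; ring
      · intro x hx
        have := Real.one_sub_le_exp_neg x
        have h2 := mul_le_mul_of_nonneg_left this (Real.exp_pos x).le
        rw [← Real.exp_add] at h2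
        simp at h2
        linarith
    have h2 : MonotoneOn (fun b : ℝ => b ^ 2 / 2 - (1 - b / 3) * (Real.exp b - 1 - b))
        (Set.Ici 0) := by
      apply monotoneOn_of_hasDerivWithinAt_nonneg (convex_Ici 0)
        (f' := fun b => b + (Real.exp b - 1 - b) / 3 - (1 - b / 3) * (Real.exp b - 1))
      · fun_prop
      · intro x hx
        apply HasDerivAt.hasDerivWithinAt
        have he := Real.hasDerivAt_exp x
        have hi := hasDerivAt_id x
        convert! ((hi.pow 2).div_const 2).sub
          (((hi.div_const 3).const_sub 1).mul ((he.sub_const 1).sub hi)) using 1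
        simp; ring
      · intro x hx
        rw [interior_Ici] at hx
        have := h1 (Set.self_mem_Ici) (le_of_lt hx : (0:ℝ) ≤ x) (le_of_lt hx)
        simpa using this
    have := h2 (Set.self_mem_Ici) hb hb
    simp at this
    linarith
  have hp : 0 ≤ Real.exp b - 1 - b := by linarith [Real.add_one_le_exp b]
  rw [le_div_iff₀ (by linarith)]
  nlinarith

theorem aux_cosh_conv {r p q θ : ℝ} (h0 : 0 ≤ θ) (h1 : θ ≤ 1)
    (h : r ^ 2 = θ * p ^ 2 + (1 - θ) * q ^ 2) :
    Real.cosh r ≤ θ * Real.cosh p + (1 - θ) * Real.cosh q := by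
  refine hasSum_le (fun k => ?_) (Real.hasSum_cosh r)
    (((Real.hasSum_cosh p).mul_left θ).add ((Real.hasSum_cosh q).mul_left (1 - θ)))
  have hk := (convexOn_pow k).2 (Set.mem_Ici.2 (sq_nonneg p)) (Set.mem_Ici.2 (sq_nonneg q)) h0
    (by linarith : 0 ≤ 1 - θ) (by ring)
  simp only [smul_eq_mul] at hk
  rw [← h] at hk
  rw [pow_mul, pow_mul, pow_mul, mul_div_assoc', mul_div_assoc', ← add_div]
  gcongr

theorem aux_cosh_add {H : Type*} [NormedAddCommGroup H] [InnerProductSpace ℝ H] (x y : H) :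
    Real.cosh ‖x + y‖ ≤ inner ℝ ((Real.sinh ‖x‖ / ‖x‖) • x) y +
      Real.cosh ‖x‖ * (Real.exp ‖y‖ - ‖y‖) := by
  have hy0 := norm_nonneg y
  have hs := Real.self_le_sinh_iff.2 hy0
  have hsc := (Real.sinh_lt_cosh ‖x‖).le
  have hs0 := Real.sinh_nonneg_iff.2 (norm_nonneg x)
  have he : Real.exp ‖y‖ = Real.cosh ‖y‖ + Real.sinh ‖y‖ := (Real.cosh_add_sinh _).symm
  by_cases hx : ‖x‖ = 0
  · have : x = 0 := by simpa using hx
    subst this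
    simp only [zero_add, norm_zero, Real.sinh_zero, Real.cosh_zero, smul_zero, inner_zero_left, one_mul]
    linarith
  by_cases hy : ‖y‖ = 0
  · have : y = 0 := by simpa using hy
    subst this
    simp
  set c := inner ℝ x y / (‖x‖ * ‖y‖) with hc
  have hcm : inner ℝ x y = ‖x‖ * ‖y‖ * c := by rw [hc]; field_simp
  have hcabs := abs_le.1 (abs_real_inner_div_norm_mul_norm_le_one x y)
  rw [← hc] at hcabs
  have hn : ‖x + y‖ ^ 2 = ((1 + c) / 2) * (‖x‖ + ‖y‖) ^ 2 + (1 - (1 + c) / 2) * (‖x‖ - ‖y‖) ^ 2 := by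
    rw [norm_add_sq_real, hcm]; ring
  have h := aux_cosh_conv (by linarith) (by linarith) hn
  rw [Real.cosh_add, Real.cosh_sub] at h
  rw [inner_smul_left, hcm, he]
  have e1 : (starRingEnd ℝ) (Real.sinh ‖x‖ / ‖x‖) * (‖x‖ * ‖y‖ * c) = Real.sinh ‖x‖ * ‖y‖ * c := by
    simp; field_simp
  rw [e1]
  have h3 : Real.sinh ‖x‖ * (Real.sinh ‖y‖ - ‖y‖) * c ≤ Real.cosh ‖x‖ * (Real.sinh ‖y‖ - ‖y‖) := by
    have a1 : Real.sinh ‖x‖ * (Real.sinh ‖y‖ - ‖y‖) ≤ Real.cosh ‖x‖ * (Real.sinh ‖y‖ - ‖y‖) :=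
      mul_le_mul_of_nonneg_right hsc (by linarith)
    have a0 : 0 ≤ Real.sinh ‖x‖ * (Real.sinh ‖y‖ - ‖y‖) := mul_nonneg hs0 (by linarith)
    nlinarith
  nlinarith

section prob
set_option linter.unusedSectionVars false
variable {H Ω : Type*} [NormedAddCommGroup H] [InnerProductSpace ℝ H] [CompleteSpace H]
    [SecondCountableTopology H] [MeasurableSpace H] [BorelSpace H] [MeasurableSpace Ω]

theorem aux_integrable {P : Measure Ω} [IsProbabilityMeasure P] {f : Ω → ℝ} {C : ℝ}
    (hf : Measurable f) (hC : ∀ ω, ‖f ω‖ ≤ C) : Integrable f P :=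
  Integrable.of_bound hf.aestronglyMeasurable C (Filter.Eventually.of_forall hC)

theorem aux_cosh_bound {x C : ℝ} (hx : 0 ≤ x) (h : x ≤ C) : ‖Real.cosh x‖ ≤ Real.cosh C := by
  rw [Real.norm_eq_abs, abs_of_pos (Real.cosh_pos x)]
  rw [Real.cosh_le_cosh, abs_of_nonneg hx, abs_of_nonneg (hx.trans h)]
  exact h

theorem aux_inner_step (P : Measure Ω) [IsProbabilityMeasure P] {M V l : ℝ} (hl : 0 ≤ l)
    (hlM : l * M < 3) (Y : Ω → H) (hm : Measurable Y) (hb : ∀ ω, ‖Y ω‖ ≤ M)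
    (h0 : ∫ ω, Y ω ∂P = 0) (hV : ∫ ω, ‖Y ω‖ ^ 2 ∂P = V) (s : H) :
    ∫ ω, Real.cosh ‖s + l • Y ω‖ ∂P
      ≤ Real.cosh ‖s‖ * Real.exp (l ^ 2 * V / (2 * (1 - l * M / 3))) := by
  set w : H := (Real.sinh ‖s‖ / ‖s‖) • s with hw
  have hYint : Integrable Y P :=
    Integrable.of_bound hm.aestronglyMeasurable M (Filter.Eventually.of_forall hb)
  have hY2 : Integrable (fun ω => ‖Y ω‖ ^ 2) P := by
    apply aux_integrable (C := M ^ 2) (by fun_prop)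
    intro ω
    rw [Real.norm_eq_abs, abs_of_nonneg (by positivity)]
    exact pow_le_pow_left₀ (norm_nonneg _) (hb ω) 2
  have hin : Integrable (fun ω => inner ℝ w (l • Y ω)) P := (hYint.smul l).const_inner w
  have hin0 : ∫ ω, inner ℝ w (l • Y ω) ∂P = 0 := by
    have : (fun ω => inner ℝ w (l • Y ω)) = fun ω => l * inner ℝ w (Y ω) := by
      ext ω; rw [inner_smul_right]
    rw [this, integral_const_mul, integral_inner hYint, h0]
    simp
  set κ := 1 / (2 * (1 - l * M / 3)) with hκ
  have hpt : ∀ ω, Real.cosh ‖s + l • Y ω‖ ≤ inner ℝ w (l • Y ω) +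
      (Real.cosh ‖s‖ + Real.cosh ‖s‖ * (l ^ 2 * κ) * ‖Y ω‖ ^ 2) := by
    intro ω
    have h1 := aux_cosh_add s (l • Y ω)
    have hn : ‖l • Y ω‖ = l * ‖Y ω‖ := by rw [norm_smul, Real.norm_eq_abs, abs_of_nonneg hl]
    have h2 := aux_bern (b := ‖l • Y ω‖) (K := l * M) (norm_nonneg _)
      (by rw [hn]; exact mul_le_mul_of_nonneg_left (hb ω) hl) hlM
    have h3 := mul_le_mul_of_nonneg_left h2 (Real.cosh_pos ‖s‖).le
    have h4 : Real.cosh ‖s‖ * (‖l • Y ω‖ ^ 2 / (2 * (1 - l * M / 3))) =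
      Real.cosh ‖s‖ * (l ^ 2 * κ) * ‖Y ω‖ ^ 2 := by rw [hn, hκ]; ring
    rw [h4] at h3
    linarith
  have hc : Integrable (fun ω => Real.cosh ‖s + l • Y ω‖) P := by
    apply aux_integrable (C := Real.cosh (‖s‖ + l * M)) (by fun_prop)
    intro ω
    apply aux_cosh_bound (norm_nonneg _)
    refine (norm_add_le _ _).trans ?_
    rw [norm_smul, Real.norm_eq_abs, abs_of_nonneg hl]
    gcongr
    exact hb ω
  have hr : Integrable (fun ω => Real.cosh ‖s‖ + Real.cosh ‖s‖ * (l ^ 2 * κ) * ‖Y ω‖ ^ 2) P :=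
    (integrable_const _).add (hY2.const_mul _)
  calc ∫ ω, Real.cosh ‖s + l • Y ω‖ ∂P
      ≤ ∫ ω, (inner ℝ w (l • Y ω) +
      (Real.cosh ‖s‖ + Real.cosh ‖s‖ * (l ^ 2 * κ) * ‖Y ω‖ ^ 2)) ∂P :=
        integral_mono hc (hin.add hr) hpt
    _ = Real.cosh ‖s‖ * (l ^ 2 * V / (2 * (1 - l * M / 3)) + 1) := by
        rw [integral_add hin hr, hin0, integral_add (integrable_const _) (hY2.const_mul _),
          integral_const_mul, hV]
        have hd : l ^ 2 * V / (2 * (1 - l * M / 3)) = l ^ 2 * V * κ := by rw [hκ, mul_one_div]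
        rw [hd]
        simp
        ring
    _ ≤ _ := mul_le_mul_of_nonneg_left (Real.add_one_le_exp _) (Real.cosh_pos _).le

theorem aux_sum_bound {ξ : ℕ → Ω → H} {M : ℝ} (hb : ∀ t ω, ‖ξ t ω‖ ≤ M) (n : ℕ) (ω : Ω) :
    ‖∑ t ∈ range n, ξ t ω‖ ≤ n * M := by
  refine (norm_sum_le_of_le _ (fun t _ => hb t ω)).trans ?_
  simp

theorem aux_cosh_sum (P : Measure Ω) [IsProbabilityMeasure P] {M V l : ℝ} (hl : 0 ≤ l)
    (hlM : l * M < 3) (ξ : ℕ → Ω → H) (hm : ∀ t, Measurable (ξ t)) (hb : ∀ t ω, ‖ξ t ω‖ ≤ M)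
    (hind : iIndepFun ξ P)
    (h0 : ∀ t, ∫ ω, ξ t ω ∂P = 0) (hV : ∀ t, ∫ ω, ‖ξ t ω‖ ^ 2 ∂P = V) (n : ℕ) :
    ∫ ω, Real.cosh ‖l • ∑ t ∈ range n, ξ t ω‖ ∂P
      ≤ Real.exp (n * (l ^ 2 * V / (2 * (1 - l * M / 3)))) := by
  induction n with
  | zero => simp
  | succ n ih =>
    set E := l ^ 2 * V / (2 * (1 - l * M / 3)) with hE
    set S : Ω → H := fun ω => ∑ t ∈ range n, ξ t ω with hS
    have hSm : Measurable S := by fun_prop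
    have hI : IndepFun S (ξ n) P := by
      have := hind.indepFun_sum_range_succ hm n
      convert! this using 1
      ext ω; simp [hS]
    have hprod := hI.map_prod_eq_prod_map_map hSm.aemeasurable (hm n).aemeasurable
    have : IsProbabilityMeasure (P.map S) := Measure.isProbabilityMeasure_map hSm.aemeasurable
    have : IsProbabilityMeasure (P.map (ξ n)) :=
      Measure.isProbabilityMeasure_map (hm n).aemeasurable
    set f : H × H → ℝ := fun p => Real.cosh ‖l • p.1 + l • p.2‖ with hf
    have hfm : Measurable f := by fun_prop
    have hpm : Measurable (fun ω => (S ω, ξ n ω)) := hSm.prodMk (hm n)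
    have hSb : ∀ ω, ‖S ω‖ ≤ n * M := aux_sum_bound hb n
    have hfint : Integrable f ((P.map S).prod (P.map (ξ n))) := by
      rw [← hprod, integrable_map_measure hfm.aestronglyMeasurable hpm.aemeasurable]
      apply aux_integrable (C := Real.cosh (l * (n * M) + l * M)) (hfm.comp hpm)
      intro ω
      apply aux_cosh_bound (norm_nonneg _)
      refine (norm_add_le _ _).trans ?_
      rw [norm_smul, norm_smul, Real.norm_eq_abs, abs_of_nonneg hl]
      gcongr
      · exact hSb ω
      · exact hb n ω
    have hgm : Measurable (fun s : H => Real.cosh ‖l • s‖) := by fun_prop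
    have hgint : Integrable (fun s : H => Real.cosh ‖l • s‖) (P.map S) := by
      rw [integrable_map_measure hgm.aestronglyMeasurable hSm.aemeasurable]
      apply aux_integrable (C := Real.cosh (l * (n * M))) (hgm.comp hSm)
      intro ω
      apply aux_cosh_bound (norm_nonneg _)
      rw [norm_smul, Real.norm_eq_abs, abs_of_nonneg hl]
      gcongr
      exact hSb ω
    calc ∫ ω, Real.cosh ‖l • ∑ t ∈ range (n + 1), ξ t ω‖ ∂P
        = ∫ ω, f (S ω, ξ n ω) ∂P := by
          congr 1; ext ω; simp only [hf, hS]; rw [sum_range_succ, smul_add]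
      _ = ∫ p, f p ∂((P.map S).prod (P.map (ξ n))) := by
          rw [← hprod, integral_map hpm.aemeasurable hfm.aestronglyMeasurable]
      _ = ∫ s, ∫ x, f (s, x) ∂(P.map (ξ n)) ∂(P.map S) := integral_prod f hfint
      _ ≤ ∫ s, Real.cosh ‖l • s‖ * Real.exp E ∂(P.map S) := by
          apply integral_mono hfint.integral_prod_left (hgint.mul_const _)
          intro s
          have hfs : Measurable (fun y => f (s, y)) := hfm.comp measurable_prodMk_left
          simp only
          rw [integral_map (hm n).aemeasurable hfs.aestronglyMeasurable]
          exact aux_inner_step P hl hlM (ξ n) (hm n) (hb n) (h0 n) (hV n) (l • s)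
      _ = (∫ ω, Real.cosh ‖l • S ω‖ ∂P) * Real.exp E := by
          rw [integral_mul_const, integral_map hSm.aemeasurable hgm.aestronglyMeasurable]
      _ ≤ Real.exp (n * E) * Real.exp E := mul_le_mul_of_nonneg_right ih (Real.exp_pos _).le
      _ = Real.exp ((n + 1 : ℕ) * E) := by rw [← Real.exp_add]; congr 1; push_cast; ring

theorem aux_bernstein (P : Measure Ω) [IsProbabilityMeasure P] {M V L : ℝ} (hL : 0 < L)
    (hM : 0 ≤ M)
    (ξ : ℕ → Ω → H) (hm : ∀ t, Measurable (ξ t)) (hb : ∀ t ω, ‖ξ t ω‖ ≤ M)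
    (hind : iIndepFun ξ P)
    (h0 : ∀ t, ∫ ω, ξ t ω ∂P = 0) (hV : ∀ t, ∫ ω, ‖ξ t ω‖ ^ 2 ∂P = V) (n : ℕ) (hn : 0 < n) :
    P.real {ω | Real.sqrt (2 * (n * V) * L) + M / 3 * L < ‖∑ t ∈ range n, ξ t ω‖}
      ≤ 2 * Real.exp (-L) := by
  have hn' : (0:ℝ) < n := by exact_mod_cast hn
  have hV0 : 0 ≤ V := by rw [← hV 0]; exact integral_nonneg (fun ω => by positivity)
  rcases hV0.eq_or_lt with hVz | hVp
  · have hz : ∀ t, ∀ᵐ ω ∂P, ξ t ω = 0 := by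
      intro t
      have h := hV t
      rw [← hVz, integral_eq_zero_iff_of_nonneg (fun ω => by positivity)] at h
      · filter_upwards [h] with ω hω
        simpa using hω
      · apply aux_integrable (C := M ^ 2) (by have := hm t; fun_prop)
        intro ω
        rw [Real.norm_eq_abs, abs_of_nonneg (by positivity)]
        exact pow_le_pow_left₀ (norm_nonneg _) (hb t ω) 2
    have hz' := ae_all_iff.2 hz
    have : P {ω | Real.sqrt (2 * (n * V) * L) + M / 3 * L < ‖∑ t ∈ range n, ξ t ω‖} = 0 := by
      have h : ∀ᵐ ω ∂P, ¬ (Real.sqrt (2 * (n * V) * L) + M / 3 * L < ‖∑ t ∈ range n, ξ t ω‖) := by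
        filter_upwards [hz'] with ω hω
        simp only [hω, sum_const_zero, norm_zero, not_lt]
        positivity
      rw [ae_iff] at h
      simpa using h
    rw [measureReal_def, this]
    simp
    positivity
  · set v := n * V with hv
    have hvp : 0 < v := by positivity
    set c := M / 3 with hc
    have hc0 : 0 ≤ c := by positivity
    set w := Real.sqrt (2 * L / v) with hw
    have hwp : 0 < w := Real.sqrt_pos.2 (by positivity)
    have hw2 : w ^ 2 * v = 2 * L := by
      rw [hw, Real.sq_sqrt (by positivity)]; field_simp
    set l := w / (1 + c * w) with hl
    have h1 : 0 < 1 + c * w := by positivity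
    have hl0 : 0 < l := by positivity
    have hr : Real.sqrt (2 * v * L) = w * v := by
      rw [show 2 * v * L = (w * v) ^ 2 by linear_combination (-v) * hw2]
      exact Real.sqrt_sq (by positivity)
    have hlM : l * M < 3 := by
      have : l * M = 3 * (c * w) / (1 + c * w) := by rw [hl, hc]; field_simp
      rw [this, div_lt_iff₀ h1]; nlinarith
    have hmain := aux_cosh_sum P hl0.le hlM ξ hm hb hind h0 hV n
    set r := Real.sqrt (2 * v * L) + c * L with hrdef
    have hexp : n * (l ^ 2 * V / (2 * (1 - l * M / 3))) = l * r - L := by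
      have e1 : 1 - l * M / 3 = 1 / (1 + c * w) := by
        rw [hl, hc]; field_simp; ring
      rw [e1, hrdef, hr, hl]
      have : n * ((w / (1 + c * w)) ^ 2 * V / (2 * (1 / (1 + c * w)))) = (w ^ 2 * v) / 2 / (1 + c * w) := by
        rw [hv]; field_simp
      rw [this]
      rw [show w / (1 + c * w) * (w * v + c * L) = (w ^ 2 * v + c * w * L) / (1 + c * w) by
        field_simp, hw2]
      field_simp
      ring
    rw [hexp] at hmain
    have hint : Integrable (fun ω => Real.cosh ‖l • ∑ t ∈ range n, ξ t ω‖) P := by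
      apply aux_integrable (C := Real.cosh (l * (n * M))) (by fun_prop)
      intro ω
      apply aux_cosh_bound (norm_nonneg _)
      rw [norm_smul, Real.norm_eq_abs, abs_of_pos hl0]
      gcongr
      exact aux_sum_bound hb n ω
    have hmk := mul_meas_ge_le_integral_of_nonneg
      (Filter.Eventually.of_forall (fun ω => (Real.cosh_pos _).le)) hint (Real.exp (l * r) / 2)
    have hsub : P.real {ω | r < ‖∑ t ∈ range n, ξ t ω‖} ≤
        P.real {ω | Real.exp (l * r) / 2 ≤ Real.cosh ‖l • ∑ t ∈ range n, ξ t ω‖} := by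
      apply measureReal_mono _ (measure_ne_top _ _)
      intro ω hω
      simp only [Set.mem_ofPred_eq] at hω ⊢
      rw [norm_smul, Real.norm_eq_abs, abs_of_pos hl0, Real.cosh_eq]
      have : Real.exp (l * r) ≤ Real.exp (l * ‖∑ t ∈ range n, ξ t ω‖) :=
        Real.exp_le_exp.2 (mul_le_mul_of_nonneg_left hω.le hl0.le)
      have := Real.exp_pos (-(l * ‖∑ t ∈ range n, ξ t ω‖))
      linarith
    have hE : Real.exp (l * r - L) = Real.exp (l * r) * Real.exp (-L) := by
      rw [← Real.exp_add]; congr 1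
    rw [hE] at hmain
    have hp := Real.exp_pos (l * r)
    have h5 : Real.exp (l * r) * P.real {ω | r < ‖∑ t ∈ range n, ξ t ω‖} ≤
        Real.exp (l * r) * (2 * Real.exp (-L)) := by nlinarith
    exact le_of_mul_le_mul_left h5 hp

theorem aux_lower (P : Measure Ω) [IsProbabilityMeasure P] {M V L : ℝ} (hL : 0 < L)
    (Z : ℕ → Ω → ℝ) (hm : ∀ t, Measurable (Z t)) (hZ0 : ∀ t ω, 0 ≤ Z t ω)
    (hb : ∀ t ω, Z t ω ≤ M ^ 2) (hind : iIndepFun Z P)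
    (hV : ∀ t, ∫ ω, Z t ω ∂P = V) (n : ℕ) (hn : 0 < n) (hVp : 0 < V) (hM : 0 < M) :
    P.real {ω | ∑ t ∈ range n, Z t ω ≤ n * V - Real.sqrt (2 * (n * M ^ 2 * V) * L)}
      ≤ Real.exp (-L) := by
  have hn' : (0:ℝ) < n := by exact_mod_cast hn
  set v := n * M ^ 2 * V with hv
  have hvp : 0 < v := by positivity
  set r := Real.sqrt (2 * v * L) with hr
  have hr2 : r ^ 2 = 2 * v * L := Real.sq_sqrt (by positivity)
  have hr0 : 0 ≤ r := Real.sqrt_nonneg _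
  set l := r / v with hl
  have hl0 : 0 ≤ l := by positivity
  have hmgf : ∀ t, mgf (Z t) P (-l) ≤ Real.exp (-l * V + l ^ 2 * M ^ 2 * V / 2) := by
    intro t
    have hZi : Integrable (Z t) P := by
      apply aux_integrable (C := M ^ 2) (hm t)
      intro ω
      rw [Real.norm_eq_abs, abs_of_nonneg (hZ0 t ω)]
      exact hb t ω
    have h1 : mgf (Z t) P (-l) ≤ ∫ ω, (1 + (-l + l ^ 2 * M ^ 2 / 2) * Z t ω) ∂P := by
      apply integral_mono
      · have := hm t
        apply aux_integrable (C := 1) (by fun_prop)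
        intro ω
        rw [Real.norm_eq_abs, abs_of_pos (Real.exp_pos _), Real.exp_le_one_iff]
        nlinarith [hZ0 t ω, mul_nonneg hl0 (hZ0 t ω)]
      · exact (integrable_const _).add (hZi.const_mul _)
      · intro ω
        have h := aux_exp_neg (mul_nonneg hl0 (hZ0 t ω))
        simp only [neg_mul]
        refine h.trans ?_
        have : (l * Z t ω) ^ 2 ≤ l ^ 2 * M ^ 2 * Z t ω := by
          have := mul_le_mul_of_nonneg_left (mul_le_mul_of_nonneg_right (hb t ω) (hZ0 t ω))
            (sq_nonneg l)
          nlinarith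
        linarith
    rw [integral_add (integrable_const _) (hZi.const_mul _), integral_const_mul, hV] at h1
    simp at h1
    refine h1.trans ?_
    have := Real.add_one_le_exp (-l * V + l ^ 2 * M ^ 2 * V / 2)
    linarith
  have hint : Integrable (fun ω => Real.exp (-l * (∑ t ∈ range n, Z t) ω)) P := by
    apply aux_integrable (C := 1) (by fun_prop)
    intro ω
    rw [Real.norm_eq_abs, abs_of_pos (Real.exp_pos _), Real.exp_le_one_iff, Finset.sum_apply]
    have : 0 ≤ ∑ t ∈ range n, Z t ω := sum_nonneg (fun t _ => hZ0 t ω)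
    nlinarith [mul_nonneg hl0 this]
  have h := measure_le_le_exp_mul_mgf (μ := P) (X := ∑ t ∈ range n, Z t) (t := -l)
    (n * V - r) (by linarith) hint
  simp only [Finset.sum_apply] at h
  refine h.trans ?_
  rw [hind.mgf_sum hm]
  have hp : ∏ t ∈ range n, mgf (Z t) P (-l) ≤
      ∏ t ∈ range n, Real.exp (-l * V + l ^ 2 * M ^ 2 * V / 2) :=
    prod_le_prod (fun t _ => mgf_nonneg) (fun t _ => hmgf t)
  refine (mul_le_mul_of_nonneg_left hp (Real.exp_pos _).le).trans ?_
  rw [prod_const, card_range, ← Real.exp_nat_mul, ← Real.exp_add, Real.exp_le_exp]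
  have : -(-l) * (n * V - r) + n * (-l * V + l ^ 2 * M ^ 2 * V / 2) = - l * r + l ^ 2 * v / 2 := by
    rw [hv]; ring
  rw [this]
  have e1 : l * r = 2 * L := by rw [hl, div_mul_eq_mul_div, ← pow_two, hr2]; field_simp
  have e2 : l ^ 2 * v = 2 * L := by
    rw [hl, div_pow, hr2]; field_simp
  linarith

end prob

section emp
variable {𝒳 H : Type*} [NormedAddCommGroup H] [InnerProductSpace ℝ H]

theorem aux_emp (φ : 𝒳 → H) (n : ℕ) (hn : 2 ≤ n) (x : ℕ → 𝒳) (m : H) :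
    ∑ t ∈ range n, ‖φ (x t) - m‖ ^ 2 =
      ((n : ℝ) - 1) * empVar φ n x + n * ‖empKME φ n x - m‖ ^ 2 := by
  have hn' : (2:ℝ) ≤ n := by exact_mod_cast hn
  unfold empVar empKME kerG
  set A := ∑ t ∈ range n, φ (x t) with hA
  have h1 : ∑ t ∈ range n, (inner ℝ (φ (x t)) (φ (x t)) -
      (n : ℝ)⁻¹ * ∑ s ∈ range n, inner ℝ (φ (x t)) (φ (x s))) =
      ∑ t ∈ range n, ‖φ (x t)‖ ^ 2 - (n : ℝ)⁻¹ * ‖A‖ ^ 2 := by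
    rw [sum_sub_distrib, ← mul_sum]
    congr 1
    · exact sum_congr rfl (fun t _ => real_inner_self_eq_norm_sq _)
    · congr 1
      rw [← real_inner_self_eq_norm_sq, hA, sum_inner]
      exact sum_congr rfl (fun t _ => (inner_sum _ _ _).symm)
  rw [h1]
  have h2 : ∑ t ∈ range n, ‖φ (x t) - m‖ ^ 2 =
      ∑ t ∈ range n, ‖φ (x t)‖ ^ 2 - 2 * inner ℝ A m + n * ‖m‖ ^ 2 := by
    simp_rw [norm_sub_sq_real]
    rw [sum_add_distrib, sum_sub_distrib, ← mul_sum, hA, sum_inner]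
    simp
  rw [h2, norm_sub_sq_real, norm_smul, inner_smul_left]
  have : (n : ℝ) - 1 ≠ 0 := by linarith
  have : (n : ℝ) ≠ 0 := by linarith
  simp
  field_simp
  ring

theorem aux_empVar_nonneg (φ : 𝒳 → H) (n : ℕ) (hn : 2 ≤ n) (x : ℕ → 𝒳) : 0 ≤ empVar φ n x := by
  have hn' : (2:ℝ) ≤ n := by exact_mod_cast hn
  have h := aux_emp φ n hn x (empKME φ n x)
  have h0 : 0 ≤ ∑ t ∈ range n, ‖φ (x t) - empKME φ n x‖ ^ 2 := sum_nonneg (fun t _ => by positivity)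
  rw [h] at h0
  simp at h0
  exact nonneg_of_mul_nonneg_right h0 (by linarith)

theorem aux_range (φ : 𝒳 → H) (hφbdd : ∃ C : ℝ, ∀ x : 𝒳, ‖φ x‖ ≤ C) (x y : 𝒳) :
    ‖φ x - φ y‖ ≤ Real.sqrt 2 * Real.sqrt (kerRange φ) := by
  obtain ⟨C, hC⟩ := hφbdd
  have hb : ∀ p : 𝒳 × 𝒳, |kerG φ p.1 p.2| ≤ C * C := fun p =>
    (abs_real_inner_le_norm _ _).trans
      (mul_le_mul (hC _) (hC _) (norm_nonneg _) ((norm_nonneg _).trans (hC p.1)))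
  have hA : BddAbove (Set.range fun p : 𝒳 × 𝒳 => kerG φ p.1 p.2) :=
    ⟨C * C, by rintro _ ⟨p, rfl⟩; exact (abs_le.1 (hb p)).2⟩
  have hB : BddBelow (Set.range fun p : 𝒳 × 𝒳 => kerG φ p.1 p.2) :=
    ⟨-(C * C), by rintro _ ⟨p, rfl⟩; exact (abs_le.1 (hb p)).1⟩
  have h1 := le_ciSup hA (x, x)
  have h2 := le_ciSup hA (y, y)
  have h3 := ciInf_le hB (x, y)
  rw [← Real.sqrt_mul (by norm_num)]
  apply Real.le_sqrt_of_sq_le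
  rw [norm_sub_sq_real, ← real_inner_self_eq_norm_sq, ← real_inner_self_eq_norm_sq]
  unfold kerRange
  unfold kerG at *
  simp only at h1 h2 h3
  linarith
end emp

theorem aux_num (b g q : ℝ) (hg0 : 0 ≤ g) :
    b + 1.88 * (Real.sqrt 2 * g) * q ^ 2 ≤ b + 16 / 3 * g * (q ^ 2 / 2) := by
  have h2 : Real.sqrt 2 ≤ 1.4143 := by
    rw [Real.sqrt_le_left (by norm_num)]; norm_num
  have hg : 0 ≤ g * q ^ 2 := by positivity
  nlinarith [mul_le_mul_of_nonneg_right h2 hg]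

set_option maxHeartbeats 1000000 in
theorem aux_arm {𝒳 H Ω : Type*} [MeasurableSpace 𝒳]
    [NormedAddCommGroup H] [InnerProductSpace ℝ H] [CompleteSpace H]
    [SecondCountableTopology H] [MeasurableSpace H] [BorelSpace H] [MeasurableSpace Ω]
    (P : Measure Ω) [IsProbabilityMeasure P]
    (φ : 𝒳 → H) (hφmeas : Measurable φ) (hφbdd : ∃ C : ℝ, ∀ x : 𝒳, ‖φ x‖ ≤ C)
    (ν : Measure 𝒳) [IsProbabilityMeasure ν]
    (n : ℕ) (hn : 2 ≤ n) (L : ℝ) (hL : 0 < L)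
    (X : ℕ → Ω → 𝒳) (hXmeas : ∀ t, Measurable (X t))
    (hXlaw : ∀ t, Measure.map (X t) P = ν) (hXindep : iIndepFun X P) :
    P.real {ω | Real.sqrt (empVar φ n (fun t => X t ω)) * Real.sqrt (2 * L / n)
        + (16 / 3) * Real.sqrt (kerRange φ) * (L / n)
          < ‖empKME φ n (fun t => X t ω) - KME φ ν‖} ≤ 3 * Real.exp (-L) := by
  have hn' : (2:ℝ) ≤ n := by exact_mod_cast hn
  have hnp : (0:ℝ) < n := by linarith
  set m := KME φ ν with hm
  set M := Real.sqrt 2 * Real.sqrt (kerRange φ) with hMdef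
  have hM0 : 0 ≤ M := by positivity
  have hφint : Integrable φ ν := by
    obtain ⟨C, hC⟩ := hφbdd
    exact Integrable.of_bound hφmeas.aestronglyMeasurable C (Filter.Eventually.of_forall hC)
  have hbM : ∀ x, ‖φ x - m‖ ≤ M := by
    intro x
    have : φ x - m = ∫ y, (φ x - φ y) ∂ν := by
      rw [integral_sub (integrable_const _) hφint, hm, KME]; simp
    rw [this]
    have h := norm_integral_le_of_norm_le_const (μ := ν) (f := fun y => φ x - φ y) (C := M)
      (Filter.Eventually.of_forall (fun y => aux_range φ hφbdd x y))
    simpa using h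
  set V := ∫ x, ‖φ x - m‖ ^ 2 ∂ν with hVdef
  set ξ : ℕ → Ω → H := fun t ω => φ (X t ω) - m with hξ
  have hψm : Measurable (fun x => φ x - m) := by fun_prop
  have hξm : ∀ t, Measurable (ξ t) := fun t => hψm.comp (hXmeas t)
  have hξb : ∀ t ω, ‖ξ t ω‖ ≤ M := fun t ω => hbM _
  have hξind : iIndepFun ξ P := hXindep.comp (fun _ x => φ x - m) (fun _ => hψm)
  have hξ0 : ∀ t, ∫ ω, ξ t ω ∂P = 0 := by
    intro t
    have h := integral_map (μ := P) (hXmeas t).aemeasurable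
      (f := fun x => φ x - m) hψm.aestronglyMeasurable
    rw [hXlaw t] at h
    rw [hξ, ← h, integral_sub hφint (integrable_const _), hm, KME]
    simp
  have hψ2 : Measurable (fun x => ‖φ x - m‖ ^ 2) := by fun_prop
  have hξV : ∀ t, ∫ ω, ‖ξ t ω‖ ^ 2 ∂P = V := by
    intro t
    have h := integral_map (μ := P) (hXmeas t).aemeasurable
      (f := fun x => ‖φ x - m‖ ^ 2) hψ2.aestronglyMeasurable
    rw [hXlaw t] at h
    rw [hVdef, h]
  have hV0 : 0 ≤ V := integral_nonneg (fun x => by positivity)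
  have hVM : V ≤ M ^ 2 := by
    have : V ≤ ∫ x, M ^ 2 ∂ν := by
      apply integral_mono
      · apply aux_integrable (C := M ^ 2) hψ2
        intro x
        rw [Real.norm_eq_abs, abs_of_nonneg (by positivity)]
        exact pow_le_pow_left₀ (norm_nonneg _) (hbM x) 2
      · exact integrable_const _
      · intro x
        exact pow_le_pow_left₀ (norm_nonneg _) (hbM x) 2
    simpa using this
  have hB1 := aux_bernstein P hL hM0 ξ hξm hξb hξind hξ0 hξV n (by omega)
  set Z : ℕ → Ω → ℝ := fun t ω => ‖ξ t ω‖ ^ 2 with hZ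
  have hZm : ∀ t, Measurable (Z t) := fun t => by have := hξm t; fun_prop
  have hB2 : P.real {ω | ∑ t ∈ range n, Z t ω < n * V - Real.sqrt (2 * (n * M ^ 2 * V) * L)}
      ≤ Real.exp (-L) := by
    rcases hV0.eq_or_lt with h | h
    · have : {ω | ∑ t ∈ range n, Z t ω < n * V - Real.sqrt (2 * (n * M ^ 2 * V) * L)} = ∅ := by
        apply Set.eq_empty_of_forall_notMem
        intro ω hω
        simp only [Set.mem_ofPred_eq, ← h] at hω
        have h0 : 0 ≤ ∑ t ∈ range n, Z t ω := sum_nonneg (fun t _ => by positivity)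
        have := Real.sqrt_nonneg (2 * (n * M ^ 2 * 0) * L)
        linarith
      rw [this]
      simp
      positivity
    · have hMp : 0 < M := by
        rcases hM0.eq_or_lt with h' | h'
        · rw [← h'] at hVM; norm_num at hVM; linarith
        · exact h'
      refine (measureReal_mono ?_ (measure_ne_top _ _)).trans (aux_lower P (M := M) (V := V) hL Z hZm
        (fun t ω => by positivity) (fun t ω => pow_le_pow_left₀ (norm_nonneg _) (hξb t ω) 2)
        (hξind.comp (fun _ x => ‖x‖ ^ 2) (fun _ => by fun_prop)) hξV n (by omega) h hMp)
      intro ω hω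
      simp only [Set.mem_ofPred_eq] at hω ⊢
      exact hω.le
  have hsub : {ω | Real.sqrt (empVar φ n (fun t => X t ω)) * Real.sqrt (2 * L / n)
        + (16 / 3) * Real.sqrt (kerRange φ) * (L / n)
          < ‖empKME φ n (fun t => X t ω) - m‖} ⊆
      {ω | Real.sqrt (2 * (n * V) * L) + M / 3 * L < ‖∑ t ∈ range n, ξ t ω‖} ∪
      {ω | ∑ t ∈ range n, Z t ω < n * V - Real.sqrt (2 * (n * M ^ 2 * V) * L)} := by
    intro ω hω
    by_contra hcon
    simp only [Set.mem_union, Set.mem_ofPred_eq, not_or, not_lt] at hcon hω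
    obtain ⟨c1, c2⟩ := hcon
    revert hω
    rw [imp_false, not_lt]
    set D := ‖empKME φ n (fun t => X t ω) - m‖ with hD
    set q := Real.sqrt (2 * L / n) with hq
    have hq0 : 0 ≤ q := Real.sqrt_nonneg _
    have hq2 : q ^ 2 = 2 * L / n := Real.sq_sqrt (by positivity)
    have hq2' : n * q ^ 2 = 2 * L := by rw [hq2]; field_simp
    have hVs := Real.sq_sqrt hV0
    set a := Real.sqrt V with ha
    have ha0 : 0 ≤ a := Real.sqrt_nonneg _
    have hv0 := aux_empVar_nonneg φ n hn (fun t => X t ω)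
    have hvs := Real.sq_sqrt hv0
    have hid := aux_emp φ n hn (fun t => X t ω) m
    rw [← hD] at hid
    set v := Real.sqrt (empVar φ n (fun t => X t ω)) with hv
    have e1 : Real.sqrt (2 * (n * V) * L) = n * (q * a) := by
      rw [show 2 * (n * V) * L = (n * (q * a)) ^ 2 by
        rw [← hVs]; linear_combination (-(n * a ^ 2)) * hq2']
      exact Real.sqrt_sq (by positivity)
    have e2 : Real.sqrt (2 * (n * M ^ 2 * V) * L) = n * (M * q * a) := by
      rw [show 2 * (n * M ^ 2 * V) * L = (n * (M * q * a)) ^ 2 by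
        rw [← hVs]; linear_combination (-(n * M ^ 2 * a ^ 2)) * hq2']
      exact Real.sqrt_sq (by positivity)
    have e3 : ‖∑ t ∈ range n, ξ t ω‖ = n * D := by
      have : ∑ t ∈ range n, ξ t ω = (n : ℝ) • (empKME φ n (fun t => X t ω) - m) := by
        simp only [hξ, empKME]
        rw [sum_sub_distrib, smul_sub, smul_smul, mul_inv_cancel₀ hnp.ne', one_smul]
        simp [Nat.cast_smul_eq_nsmul]
      rw [this, norm_smul]
      simp [hD]
    rw [e1, e3] at c1
    rw [e2] at c2
    have hD1 : D ≤ q * a + M * q ^ 2 / 6 := by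
      have : n * D ≤ n * (q * a + M * q ^ 2 / 6) := by
        have : n * (q * a + M * q ^ 2 / 6) = n * (q * a) + M / 6 * (n * q ^ 2) := by ring
        rw [this, hq2']; linarith
      exact le_of_mul_le_mul_left this hnp
    set W := (∑ t ∈ range n, Z t ω) / n with hW
    have hWn : ∑ t ∈ range n, Z t ω = n * W := by rw [hW]; field_simp
    have hid' : n * W = (n - 1) * v ^ 2 + n * D ^ 2 := by
      rw [← hWn, hvs, ← hid]
    have hW1 : W ≤ v ^ 2 + D ^ 2 := by
      have : n * W ≤ n * (v ^ 2 + D ^ 2) := by nlinarith [sq_nonneg v]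
      exact le_of_mul_le_mul_left this hnp
    have hW2 : (a - M * q / 2) ^ 2 ≤ W + M ^ 2 * q ^ 2 / 4 := by
      have : n * (a ^ 2 - M * q * a) ≤ n * W := by rw [hVs, ← hWn]; linarith
      have := le_of_mul_le_mul_left this hnp
      nlinarith
    have haM : a ≤ M := by
      apply le_of_sq_le_sq _ hM0
      rw [hVs]; exact hVM
    have hfin := aux_det hq0 ha0 hM0 (Real.sqrt_nonneg _) hD1 hW2 hW1 haM (norm_nonneg _)
    refine hfin.trans ?_
    have hLn : L / n = q ^ 2 / 2 := by rw [hq2]; ring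
    rw [hLn, hMdef]
    exact aux_num _ _ _ (Real.sqrt_nonneg _)
  calc _ ≤ _ := measureReal_mono hsub (measure_ne_top _ _)
    _ ≤ _ := measureReal_union_le _ _
    _ ≤ 3 * Real.exp (-L) := by linarith

/-- (Lemma A.1, type I error of CLUSTER.) The probability that two arms with identical
kernel mean embeddings end up in different connected components of the CLUSTER graph is
at most `δ'`. -/
theorem cluster_type_I_error
    {𝒳 H Ω : Type*} [MeasurableSpace 𝒳] [AddCommGroup 𝒳]
    [NormedAddCommGroup H] [InnerProductSpace ℝ H] [CompleteSpace H]
    [SecondCountableTopology H] [MeasurableSpace H] [BorelSpace H] [MeasurableSpace Ω]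
    (P : Measure Ω) [IsProbabilityMeasure P]
    (φ : 𝒳 → H) (hφmeas : Measurable φ) (hφbdd : ∃ C : ℝ, ∀ x : 𝒳, ‖φ x‖ ≤ C)
    (hTI : ∃ Ψ : 𝒳 → ℝ, ∀ x y : 𝒳, kerG φ x y = Ψ (x - y))
    (N : ℕ) (hN : 2 ≤ N)
    (ν : Fin N → Measure 𝒳) [∀ i, IsProbabilityMeasure (ν i)]
    (n : ℕ) (hn : 2 ≤ n) (δ' : ℝ) (hδ0 : 0 < δ') (hδ1 : δ' ≤ 1)
    (X : Fin N → ℕ → Ω → 𝒳) (hXmeas : ∀ i t, Measurable (X i t))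
    (hXlaw : ∀ i t, Measure.map (X i t) P = ν i)
    (hXindep : iIndepFun
      (fun p : Fin N × ℕ => X p.1 p.2) P) :
    P {ω | ∃ i j : Fin N, i ≠ j ∧ KME φ (ν i) = KME φ (ν j) ∧
        ¬ (clusterGraph φ N n δ' (fun i t => X i t ω)).Reachable i j}
      ≤ ENNReal.ofReal δ' := by
  classical
  have hN' : (2:ℝ) ≤ N := by exact_mod_cast hN
  set L := Real.log (8 * ((N : ℝ) ^ 2 - N) / δ') with hLdef
  have hNN : 2 ≤ (N : ℝ) ^ 2 - N := by nlinarith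
  have harg : 1 < 8 * ((N : ℝ) ^ 2 - N) / δ' := by
    rw [lt_div_iff₀ hδ0]; linarith
  have hL : 0 < L := Real.log_pos harg
  have hexp : Real.exp (-L) = δ' / (8 * ((N : ℝ) ^ 2 - N)) := by
    rw [Real.exp_neg, hLdef, Real.exp_log (by linarith), inv_div]
  set B : Fin N → Set Ω := fun i => {ω | Real.sqrt (empVar φ n (fun t => X i t ω)) *
        Real.sqrt (2 * L / n) + (16 / 3) * Real.sqrt (kerRange φ) * (L / n)
          < ‖empKME φ n (fun t => X i t ω) - KME φ (ν i)‖} with hB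
  have hBi : ∀ i, P.real (B i) ≤ 3 * Real.exp (-L) := fun i =>
    aux_arm P φ hφmeas hφbdd (ν i) n hn L hL (X i) (hXmeas i) (hXlaw i)
      (hXindep.precomp (g := fun t : ℕ => (i, t)) (fun a b h => by simpa using h))
  have hsub : {ω | ∃ i j : Fin N, i ≠ j ∧ KME φ (ν i) = KME φ (ν j) ∧
        ¬ (clusterGraph φ N n δ' (fun i t => X i t ω)).Reachable i j} ⊆ ⋃ i, B i := by
    rintro ω ⟨i, j, hij, hk, hr⟩
    by_contra hcon
    simp only [Set.mem_iUnion, not_exists, hB, Set.mem_ofPred_eq, not_lt] at hcon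
    apply hr
    apply SimpleGraph.Adj.reachable
    unfold clusterGraph
    rw [SimpleGraph.fromRel_adj]
    refine ⟨hij, Or.inl ?_⟩
    unfold clusterThreshold
    rw [← hLdef]
    have hi := hcon i
    have hj := hcon j
    rw [← hk] at hj
    have htri := norm_sub_le_norm_sub_add_norm_sub (empKME φ n (fun t => X i t ω)) (KME φ (ν i))
      (empKME φ n (fun t => X j t ω))
    rw [norm_sub_rev (KME φ (ν i))] at htri
    linarith
  have hreal : P.real (⋃ i, B i) ≤ δ' := by
    calc P.real (⋃ i, B i) ≤ ∑ i, P.real (B i) := measureReal_iUnion_fintype_le _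
      _ ≤ ∑ i : Fin N, 3 * Real.exp (-L) := sum_le_sum (fun i _ => hBi i)
      _ = N * (3 * Real.exp (-L)) := by simp
      _ ≤ δ' := by
        rw [hexp, mul_div_assoc', mul_div_assoc', div_le_iff₀ (by linarith)]
        have h8 : (N : ℝ) * 3 ≤ 8 * ((N : ℝ) ^ 2 - N) := by nlinarith
        have := mul_le_mul_of_nonneg_left h8 hδ0.le
        linarith
  calc _ ≤ P (⋃ i, B i) := measure_mono hsub
    _ = ENNReal.ofReal (P.real (⋃ i, B i)) := (ofReal_measureReal).symm
    _ ≤ ENNReal.ofReal δ' := ENNReal.ofReal_le_ofReal hreal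

end
end

section
/- (Deterministic separation inequality.) Let Δ > 0, V_i ≥ 0, V_j ≥ 0, ḡ > 0, and 0 ≤ g̃ ≤ 2ḡ be real numbers, and let L > 0. If a real number n > 0 satisfies both n ≥ 128·max(V_i, V_j)·L/Δ² and n ≥ 64·√ḡ·L/Δ, then (√V_i + √V_j)·√(2L/n) + (56/3)·√g̃·(L/n) ≤ Δ − (√V_i + √V_j)·√(2L/n) − (8/3)·√ḡ·(L/n). -/
/-- (Deterministic separation inequality.) If `n ≥ 128 max(V_i,V_j) L / Δ²` and
`n ≥ 64 √ḡ L / Δ` then the variance-aware test threshold is dominated by the gap `Δ`: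
`(√V_i + √V_j)√(2L/n) + (56/3)√g̃ (L/n) ≤ Δ − (√V_i + √V_j)√(2L/n) − (8/3)√ḡ (L/n)`. -/
theorem deterministic_separation_inequality
    (Δ Vi Vj gbar gtil L n : ℝ)
    (hΔ : 0 < Δ) (hVi : 0 ≤ Vi) (hVj : 0 ≤ Vj) (hgbar : 0 < gbar)
    (hgtil0 : 0 ≤ gtil) (hgtil : gtil ≤ 2 * gbar) (hL : 0 < L) (hn : 0 < n)
    (h1 : n ≥ 128 * max Vi Vj * L / Δ ^ 2)
    (h2 : n ≥ 64 * Real.sqrt gbar * L / Δ) :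
    (Real.sqrt Vi + Real.sqrt Vj) * Real.sqrt (2 * L / n)
        + (56 / 3) * Real.sqrt gtil * (L / n)
      ≤ Δ - (Real.sqrt Vi + Real.sqrt Vj) * Real.sqrt (2 * L / n)
          - (8 / 3) * Real.sqrt gbar * (L / n) := by
  have key : ∀ V : ℝ, 0 ≤ V → V ≤ max Vi Vj →
      Real.sqrt V * Real.sqrt (2 * L / n) ≤ Δ / 8 := by
    intro V hV hle
    rw [← Real.sqrt_mul hV]
    apply Real.sqrt_le_iff.mpr
    refine ⟨by positivity, ?_⟩
    have h3 : 128 * max Vi Vj * L ≤ n * Δ ^ 2 := (div_le_iff₀ (by positivity)).mp h1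
    have h4 : V * L ≤ max Vi Vj * L := mul_le_mul_of_nonneg_right hle hL.le
    have h5 : V * (2 * L / n) = (2 * (V * L)) / n := by ring
    rw [h5, div_le_iff₀ hn]
    nlinarith
  have ki := key Vi hVi (le_max_left _ _)
  have kj := key Vj hVj (le_max_right _ _)
  have hg : Real.sqrt gbar * (L / n) ≤ Δ / 64 := by
    have h3 : 64 * Real.sqrt gbar * L ≤ n * Δ := (div_le_iff₀ hΔ).mp h2
    rw [← mul_div_assoc, div_le_iff₀ hn]
    linarith
  have hs : Real.sqrt gtil ≤ 3 / 2 * Real.sqrt gbar := by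
    apply Real.sqrt_le_iff.mpr
    refine ⟨by positivity, ?_⟩
    rw [mul_pow, Real.sq_sqrt hgbar.le]
    linarith
  have ht : Real.sqrt gtil * (L / n) ≤ 3 / 2 * Real.sqrt gbar * (L / n) :=
    mul_le_mul_of_nonneg_right hs (by positivity)
  linarith
end

section
/- (Budget summation bound.) Let N ≥ 2 be an integer, δ ∈ (0,1], and s > 0 be real. Set k* := max(⌈log₂(128/s²)⌉, 1) and, for each integer k ≥ 1, set δ_k := δ/(4k²) and n_k := ⌈2^k · log(8(N²−N)/δ_k)⌉. Then Σ_{k=1}^{k*} N·n_k ≤ 8N · max(128/s², 1) · log(32(N²−N)·k*²/δ). -/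
open Finset

/-- (Budget summation bound.) With `k* = max(⌈log₂(128/s²)⌉, 1)`, `δ_k = δ/(4k²)` and
`n_k = ⌈2^k log(8(N²−N)/δ_k)⌉`, the total budget over the first `k*` iterations satisfies
`Σ_{k=1}^{k*} N n_k ≤ 8N max(128/s², 1) log(32(N²−N) k*² / δ)`. -/
theorem budget_summation_bound (N : ℕ) (hN : 2 ≤ N) (δ s : ℝ)
    (hδ : 0 < δ) (hδ1 : δ ≤ 1) (hs : 0 < s)
    (kstar : ℕ) (hkstar : (kstar : ℤ) = max ⌈Real.logb 2 (128 / s ^ 2)⌉ 1)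
    (n : ℕ → ℕ)
    (hn : ∀ k : ℕ, n k = ⌈(2 : ℝ) ^ k * Real.log (8 * ((N : ℝ) ^ 2 - N) / (δ / (4 * (k : ℝ) ^ 2)))⌉₊) :
    (∑ k ∈ Icc 1 kstar, (N * n k : ℝ))
      ≤ 8 * N * max (128 / s ^ 2) 1 * Real.log (32 * ((N : ℝ) ^ 2 - N) * (kstar : ℝ) ^ 2 / δ) := by
  have hN' : (2:ℝ) ≤ N := by exact_mod_cast hN
  have hNN : (2:ℝ) ≤ (N:ℝ)^2 - N := by nlinarith
  have hA : 0 < 128 / s ^ 2 := by positivity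
  have hk1 : 1 ≤ kstar := by
    have : (1:ℤ) ≤ kstar := by rw [hkstar]; exact le_max_right _ _
    exact_mod_cast this
  set M := max (128 / s ^ 2) 1 with hM
  set L := Real.log (32 * ((N : ℝ) ^ 2 - N) * (kstar : ℝ) ^ 2 / δ) with hL
  have hpow : (2:ℝ)^kstar ≤ 2 * M := by
    rcases max_choice ⌈Real.logb 2 (128 / s ^ 2)⌉ 1 with h | h
    · rw [h] at hkstar
      have h1 := Int.ceil_lt_add_one (Real.logb 2 (128 / s ^ 2))
      rw [← hkstar] at h1
      push_cast at h1
      have h2 : (2:ℝ)^(kstar:ℝ) ≤ 2^(Real.logb 2 (128 / s ^ 2) + 1) :=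
        Real.rpow_le_rpow_of_exponent_le (by norm_num) h1.le
      rw [Real.rpow_natCast, Real.rpow_add (by norm_num),
        Real.rpow_logb (by norm_num) (by norm_num) hA, Real.rpow_one] at h2
      have := le_max_left (128 / s ^ 2) 1
      linarith
    · rw [h] at hkstar
      have : kstar = 1 := by exact_mod_cast hkstar
      rw [this]
      have := le_max_right (128 / s ^ 2) 1
      linarith
  have key : ∀ k : ℕ, 1 ≤ k → 8 * ((N : ℝ) ^ 2 - N) / (δ / (4 * (k : ℝ) ^ 2))
      = 32 * ((N : ℝ) ^ 2 - N) * (k : ℝ) ^ 2 / δ := by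
    intro k hk
    have : (0:ℝ) < k := by exact_mod_cast hk
    field_simp
    ring
  have hL1 : 1 ≤ L := by
    have hk : (1:ℝ) ≤ kstar := by exact_mod_cast hk1
    rw [hL, Real.le_log_iff_exp_le (by positivity)]
    have he := Real.exp_one_lt_d9
    rw [le_div_iff₀ hδ]
    have : (1:ℝ) ≤ (kstar:ℝ)^2 := one_le_pow₀ hk
    have : 64 * 1 ≤ 32 * ((N : ℝ) ^ 2 - N) * (kstar : ℝ) ^ 2 :=
      mul_le_mul (by linarith) this (by norm_num) (by linarith)
    nlinarith [Real.exp_pos 1]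
  have hb : ∀ k ∈ Icc 1 kstar, (N * n k : ℝ) ≤ 2 * N * L * 2^k := by
    intro k hk
    obtain ⟨h1, h2⟩ := Finset.mem_Icc.1 hk
    have hk0 : (0:ℝ) < k := by exact_mod_cast h1
    have hkk : (k:ℝ) ≤ kstar := by exact_mod_cast h2
    have hl : Real.log (32 * ((N : ℝ) ^ 2 - N) * (k : ℝ) ^ 2 / δ) ≤ L := by
      apply Real.log_le_log (by positivity)
      have : 0 ≤ 32 * ((N : ℝ) ^ 2 - N) := by linarith
      gcongr
    have hp : (1:ℝ) ≤ 2^k := one_le_pow₀ (by norm_num)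
    have h3 : (n k : ℝ) ≤ 2^k * L + 1 := by
      rw [hn, key k h1]
      calc _ ≤ (⌈(2:ℝ)^k * L⌉₊ : ℝ) := by
            exact Nat.cast_le.2 (Nat.ceil_mono (by gcongr))
        _ ≤ _ := (Nat.ceil_lt_add_one (by positivity)).le
    have h4 : (n k : ℝ) ≤ 2 * L * 2^k := by nlinarith
    calc (N * n k : ℝ) ≤ N * (2 * L * 2^k) := by gcongr
      _ = _ := by ring
  have hsum : ∀ K : ℕ, ∑ k ∈ Icc 1 K, (2:ℝ)^k ≤ 2 * 2^K := by
    intro K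
    induction K with
    | zero => simp
    | succ K ih =>
      rw [Finset.sum_Icc_succ_top (by omega), pow_succ]
      linarith
  calc _ ≤ ∑ k ∈ Icc 1 kstar, 2 * N * L * (2:ℝ)^k := Finset.sum_le_sum hb
    _ = 2 * N * L * ∑ k ∈ Icc 1 kstar, (2:ℝ)^k := by rw [Finset.mul_sum]
    _ ≤ 2 * N * L * (2 * (2 * M)) := by
      have := hsum kstar
      gcongr
      linarith
    _ = _ := by ring
end
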